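/- The permutations x = (1 5)(3 7), y = (2 3)(6 7), z = (4 6)(5 7) of the 7-element set {1,...,7} generate a group isomorphic to PSL(3,2) (equivalently, a simple group of order 168). -/

import Mathlib

open scoped MatrixGroups

/-- The involution `x = (1 5)(3 7)` (points of `{1,…,7}` encoded as `0,…,6` in `Fin 7`). -/
def xPerm : Equiv.Perm (Fin 7) := Equiv.swap 0 4 * Equiv.swap 2 6

/-- The involution `y = (2 3)(6 7)`. -/
def yPerm : Equiv.Perm (Fin 7) := Equiv.swap 1 2 * Equiv.swap 5 6

/-- The involution `z = (4 6)(5 7)`. -/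
def zPerm : Equiv.Perm (Fin 7) := Equiv.swap 3 5 * Equiv.swap 4 6

/-!
Label the points of the Fano plane by `1, …, 7`, the label of `(v₀ : v₁ : v₂)` being
`v₀ + 2 v₁ + 4 v₂`. Then `y`, `z`, `x` are the actions of the elementary transvections
`1 + E₀₁`, `1 + E₁₂`, `1 + E₂₀`. Their index pairs form a directed cycle, so taking commutators
`⁅1 + a Eᵢₖ, 1 + b Eₖⱼ⁆ = 1 + a b Eᵢⱼ` along paths yields every transvection, and these generate
`SL(3, 2)`. As `PSL(3, 2)` acts faithfully on the plane, it is isomorphic to `⟨x, y, z⟩`.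
Simplicity is Iwasawa's criterion for the action on projective space.
-/

open Matrix Matrix.SpecialLinearGroup MulAction Projectivization
open scoped LinearAlgebra.Projectivization commutatorElement

section CommRing

variable {ι R : Type*} [Fintype ι] [DecidableEq ι] [CommRing R]

lemma commutatorElement_transvection {i j k : ι} (hik : i ≠ k) (hkj : k ≠ j) (hij : i ≠ j)
    (a b : R) : ⁅transvection hik a, transvection hkj b⁆ = transvection hij (a * b) := by
  rw [commutatorElement_def, mul_inv_eq_iff_eq_mul, mul_inv_eq_iff_eq_mul]
  apply Subtype.ext
  simp only [coe_mul, transvection_coe, mul_add, mul_one, add_mul, one_mul,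
    single_mul_single_same, ne_eq, hkj.symm, not_false_eq_true, single_mul_single_of_ne, add_zero,
    hij.symm]
  abel

lemma transvection_natCast {i j : ι} (hij : i ≠ j) (m : ℕ) :
    transvection hij (m : R) = transvection hij 1 ^ m := by
  induction m with
  | zero => simp
  | succ m ih => rw [Nat.cast_succ, transvection_add, ih, pow_succ]

lemma transvection_one_mem_of_reflTransGen {H : Subgroup (SpecialLinearGroup ι R)}
    {r : ι → ι → Prop} (hr : ∀ {i j} (hij : i ≠ j), r i j → transvection hij 1 ∈ H)
    {i j : ι} (hpath : Relation.ReflTransGen r i j) (hij : i ≠ j) : transvection hij 1 ∈ H := by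
  induction hpath with
  | refl => exact absurd rfl hij
  | @tail k j _ hkj_edge ih =>
    obtain rfl | hkj := eq_or_ne k j
    · exact ih hij
    obtain rfl | hik := eq_or_ne i k
    · exact hr hij hkj_edge
    rw [← mul_one (1 : R), ← commutatorElement_transvection hik hkj hij]
    exact H.commutator_le.mp H.commutator_le_self _ (ih hik) _ (hr hkj hkj_edge)

variable (ι R) in
lemma card_specialLinearGroup_mul_card_units [Nonempty ι] :
    Nat.card (SpecialLinearGroup ι R) * Nat.card Rˣ = Nat.card (GL ι R) := by
  have hker : (GeneralLinearGroup.det (n := ι) (R := R)).ker = toGL.range := by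
    ext g
    refine ⟨fun hg ↦ ⟨⟨g, congrArg Units.val hg⟩, Units.ext rfl⟩, ?_⟩
    rintro ⟨A, rfl⟩
    exact Units.ext A.det_coe
  have hrange : (GeneralLinearGroup.det (n := ι) (R := R)).range = ⊤ :=
    MonoidHom.range_eq_top.mpr GeneralLinearGroup.det_surjective
  rw [← Subgroup.card_mul_index (GeneralLinearGroup.det (n := ι) (R := R)).ker,
    Subgroup.index_ker, hrange, Subgroup.card_top, hker,
    Nat.card_congr (MonoidHom.ofInjective toGL_injective).toEquiv]

end CommRing

section Field

variable {ι F : Type*} [Fintype ι] [DecidableEq ι] [Field F]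

-- This is `w(a) w(-1)`, where `w(t) = eᵢⱼ(t) eⱼᵢ(-t⁻¹) eᵢⱼ(t)` are the Weyl elements.
lemma diag2n_eq_transvection_mul {i j : ι} (hij : i ≠ j) {a : F} (ha : a ≠ 0) :
    diag2n hij a ha =
      transvection hij a * transvection hij.symm (-a⁻¹) * transvection hij a *
        (transvection hij (-1) * transvection hij.symm 1 * transvection hij (-1)) := by
  have hdiag : (diag2n hij a ha : Matrix ι ι F) =
      1 + single i i (a - 1) + single j j (a⁻¹ - 1) := by
    ext k l
    simp only [diag2n_coe, Matrix.add_apply, diagonal_apply, Matrix.one_apply, single_apply]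
    grind
  apply Subtype.ext
  rw [hdiag]
  simp only [sub_eq_add_neg, single_add, ← single_neg, coe_mul, transvection_coe, mul_add, add_mul,
    mul_one, one_mul, mul_neg, neg_mul, single_mul_single_same, ne_eq, ha, not_false_eq_true,
    mul_inv_cancel₀, inv_mul_cancel₀, hij, hij.symm, single_mul_single_of_ne, add_zero, neg_zero]
  abel

lemma eq_top_of_forall_transvection_mem {H : Subgroup (SpecialLinearGroup ι F)}
    (hH : ∀ {i j} (hij : i ≠ j) (c : F), transvection hij c ∈ H) : H = ⊤ := by
  cases subsingleton_or_nontrivial ι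
  · exact Subsingleton.elim _ _
  refine (Subgroup.eq_top_iff' H).mpr fun A ↦ ?_
  refine diagonal_transvection_induction' (· ∈ H) A (fun i j hij c hc ↦ ?_)
    (fun _ _ ↦ hH) fun _ _ ↦ H.mul_mem
  rw [diag2n_eq_transvection_mul]
  exact H.mul_mem (H.mul_mem (H.mul_mem (hH _ _) (hH _ _)) (hH _ _))
    (H.mul_mem (H.mul_mem (hH _ _) (hH _ _)) (hH _ _))

lemma eq_top_of_strongly_connected_transvection_mem {p : ℕ} [Fact p.Prime]
    {H : Subgroup (SpecialLinearGroup ι (ZMod p))} {r : ι → ι → Prop}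
    (hr : ∀ {i j} (hij : i ≠ j), r i j → transvection hij 1 ∈ H)
    (hconn : ∀ i j, Relation.ReflTransGen r i j) : H = ⊤ := by
  refine eq_top_of_forall_transvection_mem fun {i j} hij c ↦ ?_
  rw [← ZMod.natCast_zmod_val c, transvection_natCast]
  exact H.pow_mem (transvection_one_mem_of_reflTransGen hr (hconn i j) hij) _

variable (F) in
lemma specialLinearGroup_isPerfect (hι : 3 ≤ Fintype.card ι) :
    Group.IsPerfect (SpecialLinearGroup ι F) where
  commutator_eq_top := by
    refine eq_top_of_forall_transvection_mem fun {i j} hij c ↦ ?_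
    obtain ⟨k, hki, hkj⟩ := ENat.exists_ne_ne_of_three_le (α := ι) (by simpa using hι) i j
    rw [← mul_one c, ← commutatorElement_transvection hki.symm hkj hij]
    exact Subgroup.commutator_mem_commutator (Subgroup.mem_top _) (Subgroup.mem_top _)

variable (ι F) in
lemma iSup_lineStab_eq_top : ⨆ p : ℙ F (ι → F), lineStab p.submodule = ⊤ := by
  refine eq_top_of_forall_transvection_mem fun {i j} hij c ↦ ?_
  refine Subgroup.mem_iSup_of_mem (mk F (Pi.single i 1) (Pi.single_ne_zero_iff.mpr one_ne_zero)) ?_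
  rw [submodule_mk]
  exact SL2Gen.transvection_mem_lineStab hij c

variable (ι F) in
/-- The Iwasawa structure of `PSL(ι, F)` acting on projective space: a point `p` is sent to the
image of the abelian group of all transvections with centre `p`. It extends `PSL2.Iwasawa` to
arbitrary dimension. -/
noncomputable def pslIwasawa :
    IwasawaStructure (ProjectiveSpecialLinearGroup ι F) (ℙ F (ι → F)) where
  T := PSL.iwasawaT
  is_comm p := by
    have : IsMulCommutative (lineStab p.submodule) := by
      rw [← p.mk_rep, submodule_mk]
      exact lineStab_isMulCommutative_of_span p.rep p.rep_nonzero
    exact Subgroup.map_isMulCommutative _ _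
  is_conj g p := by
    obtain ⟨A, rfl⟩ := QuotientGroup.mk_surjective g
    rw [ProjectiveSpecialLinearGroup.smul_proj_mk, PSL.iwasawaT, PSL.smul_submodule,
      lineStab_smul, PSL.iwasawaT_map_conj]
  is_generator := by
    rw [← Subgroup.map_iSup, iSup_lineStab_eq_top]
    exact Subgroup.map_top_of_surjective _ (QuotientGroup.mk'_surjective _)

variable (F) in
theorem projectiveSpecialLinearGroup_isSimpleGroup (hι : 3 ≤ Fintype.card ι) :
    IsSimpleGroup (ProjectiveSpecialLinearGroup ι F) := by
  have : Nontrivial ι := Fintype.one_lt_card_iff_nontrivial.mp (by lia)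
  have := specialLinearGroup_isPerfect F hι
  have : Group.IsPerfect (ProjectiveSpecialLinearGroup ι F) := inferInstance
  exact IwasawaStructure.isSimpleGroup this.commutator_eq_top (pslIwasawa ι F) inferInstance

variable (ι F) in
lemma card_center_specialLinearGroup [Nonempty ι] [Finite F] :
    Nat.card (Subgroup.center (SpecialLinearGroup ι F)) =
      (Nat.card Fˣ).gcd (Fintype.card ι) := by
  rw [Nat.card_congr (center_equiv_rootsOfUnity' (Classical.arbitrary ι)).toEquiv,
    rootsOfUnity_eq_ker, IsCyclic.card_powMonoidHom_ker]

variable (F) in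
theorem card_projectiveSpecialLinearGroup_mul [Fintype F] (n : ℕ) [NeZero n] :
    Nat.card PSL(n, F) * (Nat.card Fˣ).gcd n * Nat.card Fˣ =
      ∏ i : Fin n, (Fintype.card F ^ n - Fintype.card F ^ (i : ℕ)) := by
  have hcenter := card_center_specialLinearGroup (Fin n) F
  rw [Fintype.card_fin] at hcenter
  rw [← card_GL_field, ← card_specialLinearGroup_mul_card_units, ← hcenter,
    ← Subgroup.card_eq_card_quotient_mul_card_subgroup]

end Field

/-- The nonzero vector of `𝔽₂³` whose coordinates are the binary digits of `i + 1`, the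
label in `{1, …, 7}` of the point `i : Fin 7`; the least significant digit comes first. -/
def binaryVector (i : Fin 7) : Fin 3 → ZMod 2 :=
  fun k ↦ if (i.val + 1).testBit k then 1 else 0

lemma binaryVector_ne_zero : ∀ i, binaryVector i ≠ 0 := by
  decide

lemma exists_binaryVector_eq : ∀ v ≠ 0, ∃ i, binaryVector i = v := by
  decide

lemma bijective_mk_binaryVector :
    Function.Bijective fun i ↦ mk (ZMod 2) (binaryVector i) (binaryVector_ne_zero i) := by
  constructor
  · intro i j h
    rw [mk_eq_mk_iff'] at h
    revert i j
    decide
  · refine Projectivization.ind fun v hv ↦ ?_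
    obtain ⟨i, rfl⟩ := exists_binaryVector_eq v hv
    exact ⟨i, rfl⟩

/-- The labelling of the points of the Fano plane `ℙ²(𝔽₂)` by the vectors `binaryVector`. -/
noncomputable def fanoEquiv : Fin 7 ≃ ℙ (ZMod 2) (Fin 3 → ZMod 2) :=
  Equiv.ofBijective _ bijective_mk_binaryVector

/-- The action of `PSL(3, 2)` on the seven labelled points of the Fano plane. -/
noncomputable def fanoHom : PSL(3, ZMod 2) →* Equiv.Perm (Fin 7) :=
  fanoEquiv.symm.permCongrHom.toMonoidHom.comp PSLAction.toPermHom

lemma fanoHom_injective : Function.Injective fanoHom :=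
  fanoEquiv.symm.permCongrHom.injective.comp ProjectiveSpecialLinearGroup.toPermHom_injective

lemma fanoHom_mk_eq {A : SL(3, ZMod 2)} {σ : Equiv.Perm (Fin 7)}
    (h : ∀ i, A • binaryVector i = binaryVector (σ i)) : fanoHom A = σ := by
  ext1 i
  change fanoEquiv.symm (A • fanoEquiv i) = σ i
  rw [Equiv.symm_apply_eq]
  simp only [fanoEquiv, Equiv.ofBijective_apply, smul_mk, h]

lemma fanoHom_transvection (i : Fin 3) (hi : i ≠ i + 1) :
    fanoHom (transvection hi (1 : ZMod 2)) = ![yPerm, zPerm, xPerm] i := by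
  apply fanoHom_mk_eq
  revert i
  decide

lemma range_fanoHom : fanoHom.range = Subgroup.closure {xPerm, yPerm, zPerm} := by
  have hgen : Set.range ![yPerm, zPerm, xPerm] = {xPerm, yPerm, zPerm} := by
    simp only [Matrix.range_cons, Matrix.range_empty, Set.union_empty]
    grind
  have hne (i : Fin 3) : i ≠ i + 1 := by simp
  rw [← hgen]
  apply le_antisymm
  · have hcycle (i j : Fin 3) : Relation.ReflTransGen (fun i j ↦ j = i + 1) i j := by
      obtain rfl | rfl | rfl : j = i ∨ j = i + 1 ∨ j = i + 1 + 1 := by grind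
      exacts [.refl, .single rfl, .tail (.single rfl) rfl]
    have htop : (Subgroup.closure (Set.range ![yPerm, zPerm, xPerm])).comap
        (fanoHom.comp (QuotientGroup.mk' _)) = ⊤ := by
      refine eq_top_of_strongly_connected_transvection_mem (fun {i j} hij hedge ↦ ?_) hcycle
      subst hedge
      exact Subgroup.subset_closure ⟨i, (fanoHom_transvection i hij).symm⟩
    rintro _ ⟨g, rfl⟩
    obtain ⟨A, rfl⟩ := QuotientGroup.mk_surjective g
    exact htop.ge (Subgroup.mem_top A)
  · rw [Subgroup.closure_le]
    rintro _ ⟨i, rfl⟩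
    exact ⟨_, fanoHom_transvection i (hne i)⟩

theorem xyz_generate_psl32 :
    Nonempty ((Subgroup.closure {xPerm, yPerm, zPerm} : Subgroup (Equiv.Perm (Fin 7)))
        ≃* PSL(3, ZMod 2)) ∧
      IsSimpleGroup (Subgroup.closure {xPerm, yPerm, zPerm} : Subgroup (Equiv.Perm (Fin 7))) ∧
      Nat.card (Subgroup.closure {xPerm, yPerm, zPerm} : Subgroup (Equiv.Perm (Fin 7))) = 168 := by
  let e : PSL(3, ZMod 2) ≃* Subgroup.closure {xPerm, yPerm, zPerm} :=
    (MonoidHom.ofInjective fanoHom_injective).trans (MulEquiv.subgroupCongr range_fanoHom)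
  have := projectiveSpecialLinearGroup_isSimpleGroup (ι := Fin 3) (ZMod 2) (by simp)
  refine ⟨⟨e.symm⟩, e.symm.isSimpleGroup, ?_⟩
  have hcard := card_projectiveSpecialLinearGroup_mul (ZMod 2) 3
  rw [← Nat.card_congr e.toEquiv]
  simpa [Fin.prod_univ_three] using hcard
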